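/- Consider a finite-horizon MDP in which the optimal action is unique at every state (|argmax_a Q*_h(s,a)| = 1 for all s, h), with unique optimal policy π* given by π*_h(s) = argmax_a Q*_h(s,a), and feature maps φ_h : S × A → ℝ^d. Fix a stage h ∈ {1,…,H} and let W = span{ φ_h(s', π*_h(s')) : s' ∈ S, ρ^{π*}_h(s') > 0 }. Suppose there exists a state s with ρ^{π*}_h(s) > 0 and an action a ≠ π*_h(s) with φ_h(s,a) ∉ W. Define the policy π to agree with π* everywhere except that π_h(s) = a. Then: (i) Ψ_h^π − Ψ_h^{π*} = ρ^{π*}_h(s) ( φ_h(s,a) − φ_h(s, π*_h(s)) ), hence Ψ_h^π ∉ W; and (ii) π is strictly suboptimal: E_{s₁∼μ}[ V*_1(s₁) − V^π_1(s₁) ] ≥ ρ^{π*}_h(s) Δ_h(s,a) > 0. -/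

import Mathlib

/-!
STATEMENT 4: in an MDP with unique optimal actions, if a reachable pair `(s,a)`
at stage `h` (with `ρ*_h(s) > 0`, `a ≠ π*_h(s)`) has features outside the span
`W` of optimal features, then the policy `π` obtained from `π*` by switching to
`a` at `(h,s)` satisfies
(i) `Ψ_h^π − Ψ_h^{π*} = ρ*_h(s) (φ_h(s,a) − φ_h(s,π*_h(s)))`, hence `Ψ_h^π ∉ W`;
(ii) `E_{s₁∼μ}[V*_1(s₁) − V^π_1(s₁)] ≥ ρ*_h(s) Δ_h(s,a) > 0`.
-/

open Finset Matrix

variable {S A : Type*}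

section MDP
variable [Fintype S] [Fintype A] [Nonempty A]

noncomputable def VstarAux (r : ℕ → S → A → ℝ) (p : ℕ → S → A → S → ℝ) :
    ℕ → ℕ → S → ℝ
  | 0, _, _ => 0
  | t + 1, h, s =>
      Finset.univ.sup' Finset.univ_nonempty fun a : A =>
        r h s a + ∑ s' : S, p h s a s' * VstarAux r p t (h + 1) s'

noncomputable def Vstar (H : ℕ) (r : ℕ → S → A → ℝ) (p : ℕ → S → A → S → ℝ)
    (h : ℕ) (s : S) : ℝ :=
  VstarAux r p (H + 1 - h) h s

noncomputable def Qstar (H : ℕ) (r : ℕ → S → A → ℝ) (p : ℕ → S → A → S → ℝ)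
    (h : ℕ) (s : S) (a : A) : ℝ :=
  r h s a + ∑ s' : S, p h s a s' * Vstar H r p (h + 1) s'

/-- Suboptimality gap `Δ_h(s,a) = V*_h(s) − Q*_h(s,a)`. -/
noncomputable def gap (H : ℕ) (r : ℕ → S → A → ℝ) (p : ℕ → S → A → S → ℝ)
    (h : ℕ) (s : S) (a : A) : ℝ :=
  Vstar H r p h s - Qstar H r p h s a

noncomputable def VpiAux (r : ℕ → S → A → ℝ) (p : ℕ → S → A → S → ℝ)
    (π : ℕ → S → A) : ℕ → ℕ → S → ℝ
  | 0, _, _ => 0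
  | t + 1, h, s =>
      r h s (π h s) + ∑ s' : S, p h s (π h s) s' * VpiAux r p π t (h + 1) s'

noncomputable def Vpi (H : ℕ) (r : ℕ → S → A → ℝ) (p : ℕ → S → A → S → ℝ)
    (π : ℕ → S → A) (h : ℕ) (s : S) : ℝ :=
  VpiAux r p π (H + 1 - h) h s

/-- Occupancy measure: `occAux p π μ t` is the state distribution at stage `t + 1`
under policy `π` with initial distribution `μ`. -/
noncomputable def occAux (p : ℕ → S → A → S → ℝ) (π : ℕ → S → A) (μ : S → ℝ) :
    ℕ → S → ℝ
  | 0 => μ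
  | t + 1 => fun s' => ∑ s : S, occAux p π μ t s * p (t + 1) s (π (t + 1) s) s'

/-- `occ p π μ h s = ρ^π_h(s) = P_π(s_h = s)` for `1 ≤ h`. -/
noncomputable def occ (p : ℕ → S → A → S → ℝ) (π : ℕ → S → A) (μ : S → ℝ)
    (h : ℕ) (s : S) : ℝ :=
  occAux p π μ (h - 1) s

/-- Expected feature vector `Ψ^π_h = Σ_{(s,a)} ρ^π_h(s,a) φ_h(s,a)`
(`ρ^π_h(s,a) = ρ^π_h(s) 1{π_h(s) = a}`). -/
noncomputable def Psi {d : ℕ} (φ : ℕ → S → A → Fin d → ℝ)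
    (p : ℕ → S → A → S → ℝ) (π : ℕ → S → A) (μ : S → ℝ) (h : ℕ) : Fin d → ℝ :=
  ∑ s : S, occ p π μ h s • φ h s (π h s)

end MDP

/-!
By the performance difference identity, `E_μ[V*_1 − V^π_1]` is the sum over all stages of the gaps
`Δ_i(s, π_i(s))` averaged over the occupancy measure of `π`. All these terms are nonnegative, so
the single term at `(h, s)` is a lower bound; since `π` and the reference policy agree before
stage `h`, it is weighted by the occupancy of the reference policy. For the same reason the two
expected feature vectors at stage `h` are averages over the same state distribution, and they
differ only in the summand of `s`.
-/

section Occupancy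

variable [Fintype S] {p : ℕ → S → A → S → ℝ} {π π₀ : ℕ → S → A} {μ : S → ℝ} {h : ℕ}

theorem occ_one : occ p π μ 1 = μ := rfl

theorem occ_succ (hh : 1 ≤ h) (s' : S) :
    occ p π μ (h + 1) s' = ∑ s, occ p π μ h s * p h s (π h s) s' := by
  obtain ⟨t, rfl⟩ := Nat.exists_eq_add_of_le' hh
  rfl

theorem sum_occ_succ_mul (hh : 1 ≤ h) (f : S → ℝ) :
    ∑ s', occ p π μ (h + 1) s' * f s' =
      ∑ s, occ p π μ h s * ∑ s', p h s (π h s) s' * f s' := by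
  simp only [occ_succ hh, sum_mul, mul_sum, mul_assoc]
  exact sum_comm

theorem occ_nonneg (hp : ∀ h s a s', 0 ≤ p h s a s') (hμ : ∀ s, 0 ≤ μ s) (h : ℕ) (s : S) :
    0 ≤ occ p π μ h s := by
  unfold occ
  induction h - 1 generalizing s with
  | zero => exact hμ s
  | succ t ih => exact sum_nonneg fun s' _ => mul_nonneg (ih s') (hp _ _ _ _)

theorem occ_congr (hπ : ∀ i, 1 ≤ i → i < h → π i = π₀ i) : occ p π μ h = occ p π₀ μ h := by
  induction h with
  | zero => rfl
  | succ h ih =>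
    rcases Nat.eq_zero_or_pos h with rfl | hh
    · rfl
    · ext s'
      rw [occ_succ hh, occ_succ hh, ih fun i hi hih => hπ i hi (hih.trans h.lt_succ_self),
        hπ h hh h.lt_succ_self]

end Occupancy

section ExpectedFeatures

variable [Fintype S] {d : ℕ} {φ : ℕ → S → A → Fin d → ℝ} {p : ℕ → S → A → S → ℝ}
  {π π₀ : ℕ → S → A} {μ : S → ℝ} {h : ℕ} {W : Submodule ℝ (Fin d → ℝ)}

theorem Psi_mem (hp : ∀ h s a s', 0 ≤ p h s a s') (hμ : ∀ s, 0 ≤ μ s)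
    (hW : ∀ s, 0 < occ p π μ h s → φ h s (π h s) ∈ W) : Psi φ p π μ h ∈ W := by
  refine W.sum_mem fun s _ => ?_
  rcases (occ_nonneg hp hμ h s).eq_or_lt with hzero | hpos
  · rw [← hzero, zero_smul]
    exact W.zero_mem
  · exact W.smul_mem _ (hW s hpos)

theorem Psi_sub_Psi {s : S} (hbefore : ∀ i, 1 ≤ i → i < h → π i = π₀ i)
    (hother : ∀ s' ≠ s, π h s' = π₀ h s') :
    Psi φ p π μ h - Psi φ p π₀ μ h = occ p π₀ μ h s • (φ h s (π h s) - φ h s (π₀ h s)) := by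
  rw [Psi, Psi, occ_congr hbefore, ← sum_sub_distrib, Fintype.sum_eq_single s, smul_sub]
  intro s' hs'
  rw [hother s' hs', sub_self]

theorem Psi_notMem {s : S} (hp : ∀ h s a s', 0 ≤ p h s a s') (hμ : ∀ s, 0 ≤ μ s)
    (hbefore : ∀ i, 1 ≤ i → i < h → π i = π₀ i) (hother : ∀ s' ≠ s, π h s' = π₀ h s')
    (hs : 0 < occ p π₀ μ h s) (hW : ∀ s', 0 < occ p π₀ μ h s' → φ h s' (π₀ h s') ∈ W)
    (hφ : φ h s (π h s) ∉ W) : Psi φ p π μ h ∉ W := by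
  rwa [← W.sub_mem_iff_left (Psi_mem hp hμ hW), Psi_sub_Psi hbefore hother,
    W.smul_mem_iff hs.ne', W.sub_mem_iff_left (hW s hs)]

end ExpectedFeatures

section Value

variable [Fintype S] {H : ℕ} {r : ℕ → S → A → ℝ} {p : ℕ → S → A → S → ℝ} {h : ℕ}

theorem Vpi_eq_add_sum (hh : h ≤ H) (π : ℕ → S → A) (s : S) :
    Vpi H r p π h s = r h s (π h s) + ∑ s', p h s (π h s) s' * Vpi H r p π (h + 1) s' := by
  rw [Vpi, show H + 1 - h = H + 1 - (h + 1) + 1 by lia]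
  rfl

variable [Fintype A] [Nonempty A]

theorem Vstar_eq_sup' (hh : h ≤ H) (s : S) :
    Vstar H r p h s = univ.sup' univ_nonempty (Qstar H r p h s) := by
  rw [Vstar, show H + 1 - h = H + 1 - (h + 1) + 1 by lia]
  rfl

theorem Qstar_le_Vstar (hh : h ≤ H) (s : S) (a : A) : Qstar H r p h s a ≤ Vstar H r p h s := by
  rw [Vstar_eq_sup' hh]
  exact le_sup' _ (mem_univ a)

theorem gap_nonneg (hh : h ≤ H) (s : S) (a : A) : 0 ≤ gap H r p h s a :=
  sub_nonneg.2 (Qstar_le_Vstar hh s a)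

theorem Vstar_sub_Vpi (hh : h ≤ H) (π : ℕ → S → A) (s : S) :
    Vstar H r p h s - Vpi H r p π h s = gap H r p h s (π h s) +
      ∑ s', p h s (π h s) s' * (Vstar H r p (h + 1) s' - Vpi H r p π (h + 1) s') := by
  simp only [gap, Qstar, Vpi_eq_add_sum hh, mul_sub, sum_sub_distrib]
  ring

end Value

section Regret

variable [Fintype S] [Fintype A] [Nonempty A] {H : ℕ} {r : ℕ → S → A → ℝ}
  {p : ℕ → S → A → S → ℝ} {π π₀ : ℕ → S → A} {μ : S → ℝ} {h : ℕ}

/-- The expected regret-to-go `E[V*_h(s_h) − V^π_h(s_h)]`, where `s_h ∼ ρ^π_h`. Its value at `h = 1`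
is the suboptimality of `π`, and it telescopes along the stages. -/
noncomputable def regretToGo (H : ℕ) (r : ℕ → S → A → ℝ) (p : ℕ → S → A → S → ℝ)
    (π : ℕ → S → A) (μ : S → ℝ) (h : ℕ) : ℝ :=
  ∑ s, occ p π μ h s * (Vstar H r p h s - Vpi H r p π h s)

theorem regretToGo_one :
    regretToGo H r p π μ 1 = ∑ s, μ s * (Vstar H r p 1 s - Vpi H r p π 1 s) := by
  rw [regretToGo, occ_one]

theorem regretToGo_horizon_succ : regretToGo H r p π μ (H + 1) = 0 := by
  simp [regretToGo, Vstar, Vpi, VstarAux, VpiAux]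

theorem regretToGo_sub_regretToGo_succ (hh1 : 1 ≤ h) (hhH : h ≤ H) :
    regretToGo H r p π μ h - regretToGo H r p π μ (h + 1) =
      ∑ s, occ p π μ h s * gap H r p h s (π h s) := by
  rw [regretToGo, regretToGo, sum_occ_succ_mul hh1, ← sum_sub_distrib]
  refine sum_congr rfl fun s _ => ?_
  rw [Vstar_sub_Vpi hhH, mul_add, add_sub_cancel_right]

theorem regretToGo_one_eq_sum_gap :
    regretToGo H r p π μ 1 =
      ∑ i ∈ Ico 1 (H + 1), ∑ s, occ p π μ i s * gap H r p i s (π i s) :=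
  calc regretToGo H r p π μ 1
      = -(regretToGo H r p π μ (H + 1) - regretToGo H r p π μ 1) := by
        rw [regretToGo_horizon_succ, zero_sub, neg_neg]
    _ = ∑ i ∈ Ico 1 (H + 1), (regretToGo H r p π μ i - regretToGo H r p π μ (i + 1)) := by
        rw [← sum_Ico_sub _ H.succ_pos, ← sum_neg_distrib]
        simp only [neg_sub]
    _ = ∑ i ∈ Ico 1 (H + 1), ∑ s, occ p π μ i s * gap H r p i s (π i s) :=
        sum_congr rfl fun i hi => regretToGo_sub_regretToGo_succ (mem_Ico.1 hi).1
          (Nat.le_of_lt_succ (mem_Ico.1 hi).2)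

theorem occ_mul_gap_le_regretToGo_one (hp : ∀ h s a s', 0 ≤ p h s a s') (hμ : ∀ s, 0 ≤ μ s)
    (hh1 : 1 ≤ h) (hhH : h ≤ H) (s : S) :
    occ p π μ h s * gap H r p h s (π h s) ≤ regretToGo H r p π μ 1 := by
  have hterm : ∀ i ∈ Ico 1 (H + 1), ∀ s, 0 ≤ occ p π μ i s * gap H r p i s (π i s) :=
    fun i hi s => mul_nonneg (occ_nonneg hp hμ i s)
      (gap_nonneg (Nat.le_of_lt_succ (mem_Ico.1 hi).2) s _)
  have hmem : h ∈ Ico 1 (H + 1) := mem_Ico.2 ⟨hh1, Nat.lt_succ_of_le hhH⟩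
  rw [regretToGo_one_eq_sum_gap]
  calc occ p π μ h s * gap H r p h s (π h s)
      ≤ ∑ s, occ p π μ h s * gap H r p h s (π h s) :=
        single_le_sum (f := fun s => occ p π μ h s * gap H r p h s (π h s))
          (fun s _ => hterm h hmem s) (mem_univ s)
    _ ≤ ∑ i ∈ Ico 1 (H + 1), ∑ s, occ p π μ i s * gap H r p i s (π i s) :=
        single_le_sum (f := fun i => ∑ s, occ p π μ i s * gap H r p i s (π i s))
          (fun i hi => sum_nonneg fun s _ => hterm i hi s) hmem

theorem stmt4_general {d : ℕ} {φ : ℕ → S → A → Fin d → ℝ} {W : Submodule ℝ (Fin d → ℝ)}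
    {s : S} {a : A} (hp : ∀ h s a s', 0 ≤ p h s a s') (hμ : ∀ s, 0 ≤ μ s)
    (hh1 : 1 ≤ h) (hhH : h ≤ H) (hs : 0 < occ p π₀ μ h s)
    (ha : Qstar H r p h s a < Vstar H r p h s)
    (hW : ∀ s', 0 < occ p π₀ μ h s' → φ h s' (π₀ h s') ∈ W) (hφ : φ h s a ∉ W)
    (hbefore : ∀ i, 1 ≤ i → i < h → π i = π₀ i) (hother : ∀ s' ≠ s, π h s' = π₀ h s')
    (hπ : π h s = a) :
    (Psi φ p π μ h - Psi φ p π₀ μ h = occ p π₀ μ h s • (φ h s a - φ h s (π₀ h s))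
      ∧ Psi φ p π μ h ∉ W)
    ∧ (occ p π₀ μ h s * gap H r p h s a
        ≤ ∑ s₁, μ s₁ * (Vstar H r p 1 s₁ - Vpi H r p π 1 s₁)
      ∧ 0 < occ p π₀ μ h s * gap H r p h s a) := by
  subst hπ
  refine ⟨⟨Psi_sub_Psi hbefore hother, Psi_notMem hp hμ hbefore hother hs hW hφ⟩, ?_,
    mul_pos hs (sub_pos.2 ha)⟩
  rw [← occ_congr hbefore, ← regretToGo_one]
  exact occ_mul_gap_le_regretToGo_one hp hμ hh1 hhH s

end Regret

theorem stmt4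
    {S A : Type*} [Fintype S] [Fintype A] [Nonempty A] [DecidableEq S] {d : ℕ}
    (H : ℕ) (hH : 1 ≤ H)
    (r : ℕ → S → A → ℝ) (p : ℕ → S → A → S → ℝ)
    (hp0 : ∀ h s a s', 0 ≤ p h s a s') (hp1 : ∀ h s a, ∑ s' : S, p h s a s' = 1)
    (μ : S → ℝ) (hμ0 : ∀ s, 0 ≤ μ s) (hμ1 : ∑ s : S, μ s = 1)
    (φ : ℕ → S → A → Fin d → ℝ)
    -- π* is the unique optimal policy: at every state the optimal action is
    -- unique and given by π*
    (πstar : ℕ → S → A)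
    (hunique : ∀ h, 1 ≤ h → h ≤ H → ∀ s a, a ≠ πstar h s →
        Qstar H r p h s a < Qstar H r p h s (πstar h s))
    (h : ℕ) (hh1 : 1 ≤ h) (hhH : h ≤ H)
    (s : S) (hs : 0 < occ p πstar μ h s)
    (a : A) (ha : a ≠ πstar h s)
    (W : Submodule ℝ (Fin d → ℝ))
    (hW : W = Submodule.span ℝ
        {x | ∃ s' : S, 0 < occ p πstar μ h s' ∧ x = φ h s' (πstar h s')})
    (hφ : φ h s a ∉ W)
    -- π agrees with π* everywhere except that π_h(s) = a
    (π : ℕ → S → A)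
    (hπ : π = fun i s' => if i = h ∧ s' = s then a else πstar i s') :
    -- (i)
    ((Psi φ p π μ h - Psi φ p πstar μ h
        = occ p πstar μ h s • (φ h s a - φ h s (πstar h s)))
      ∧ Psi φ p π μ h ∉ W)
    -- (ii)
    ∧ (occ p πstar μ h s * gap H r p h s a
        ≤ ∑ s₁ : S, μ s₁ * (Vstar H r p 1 s₁ - Vpi H r p π 1 s₁)
      ∧ 0 < occ p πstar μ h s * gap H r p h s a) := by
  subst hπ hW
  exact stmt4_general hp0 hμ0 hh1 hhH hs
    ((hunique h hh1 hhH s a ha).trans_le (Qstar_le_Vstar hhH s _))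
    (fun s' hs' => Submodule.subset_span ⟨s', hs', rfl⟩) hφ (by grind) (by grind) (by grind)
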